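/- arXiv:2603.29388 — 3 statements merged into one kernel-verified Lean document; each statement's English description precedes it below -/
import Mathlib

section
/- Master residual identity for the exponential-of-quadratic-form ansatz. Let f: ℝⁿ → ℝⁿ be smooth, Σ₀ constant diagonal with nonnegative entries, F: ℝⁿ × ℝ → ℝⁿ twice continuously differentiable in x and once in t, and Q: ℝ → ℝⁿˣⁿ differentiable with each Q(t) symmetric. Then the function p(x,t) = exp(−F(x,t)ᵀ Q(t) F(x,t)) satisfies, at every (x,t), ∂p/∂t + ∇·(f p) − (1/2) Tr(Σ₀ ∇²p) = [ −2 Fᵀ Q (∂F/∂t + J_F f) − Fᵀ (dQ/dt) F + (∇·f) − 2 Fᵀ Q J_F Σ₀ J_Fᵀ Q F + Tr(Σ₀ J_Fᵀ Q J_F) + Fᵀ Q Δ ] · p. -/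
open Matrix Real

/-- The divergence of a vector field `v : ℝⁿ → ℝⁿ` at `x`: `∑ i, ∂vᵢ/∂xᵢ (x)`. -/
noncomputable def divg {n : ℕ} (v : (Fin n → ℝ) → (Fin n → ℝ)) (x : Fin n → ℝ) : ℝ :=
  ∑ i, fderiv ℝ v x (Pi.single i 1) i

/-- The Jacobian matrix of a map `F : ℝⁿ → ℝⁿ` at `x`: `(J_F)ᵢⱼ = ∂Fᵢ/∂xⱼ (x)`. -/
noncomputable def jac {n : ℕ} (F : (Fin n → ℝ) → (Fin n → ℝ)) (x : Fin n → ℝ) :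
    Matrix (Fin n) (Fin n) ℝ :=
  Matrix.of fun i j => fderiv ℝ F x (Pi.single j 1) i

/-- The Hessian matrix of a scalar function `g : ℝⁿ → ℝ` at `x`:
`(∇²g)ᵢⱼ = ∂²g/∂xᵢ∂xⱼ (x)`. -/
noncomputable def hess {n : ℕ} (g : (Fin n → ℝ) → ℝ) (x : Fin n → ℝ) :
    Matrix (Fin n) (Fin n) ℝ :=
  Matrix.of fun i j => fderiv ℝ (fun y => fderiv ℝ g y (Pi.single j 1)) x (Pi.single i 1)

lemma mri_space {n : ℕ} {E : Type*} [NormedAddCommGroup E] [NormedSpace ℝ E]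
    (M : Matrix (Fin n) (Fin n) ℝ) (u w : E → Fin n → ℝ) (x : E)
    (hu : DifferentiableAt ℝ u x) (hw : DifferentiableAt ℝ w x) :
    DifferentiableAt ℝ (fun y => u y ⬝ᵥ M *ᵥ w y) x ∧
    ∀ v, fderiv ℝ (fun y => u y ⬝ᵥ M *ᵥ w y) x v
      = fderiv ℝ u x v ⬝ᵥ M *ᵥ w x + u x ⬝ᵥ M *ᵥ fderiv ℝ w x v := by
  have h1 := hasFDerivAt_pi'.1 hu.hasFDerivAt
  have h2 := hasFDerivAt_pi'.1 hw.hasFDerivAt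
  have h := HasFDerivAt.fun_sum (u := Finset.univ) (fun i _ => (h1 i).fun_mul
    (HasFDerivAt.fun_sum (u := Finset.univ) (fun j _ => (h2 j).const_mul (M i j))))
  have e : (fun y => u y ⬝ᵥ M *ᵥ w y) = fun y => ∑ i, u y i * ∑ j, M i j * w y j := by
    funext y; simp [dotProduct, mulVec]
  rw [e]
  refine ⟨h.differentiableAt, fun v => ?_⟩
  rw [HasFDerivAt.fderiv h]
  simp only [dotProduct, mulVec, ContinuousLinearMap.sum_apply, _root_.add_apply,
    _root_.smul_apply, ContinuousLinearMap.comp_apply, ContinuousLinearMap.proj_apply,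
    smul_eq_mul, Finset.sum_add_distrib]
  rw [add_comm]
  congr 1
  exact Finset.sum_congr rfl fun i _ => mul_comm _ _

lemma mri_time {n : ℕ} (Q : ℝ → Matrix (Fin n) (Fin n) ℝ) (Q' : Matrix (Fin n) (Fin n) ℝ)
    (u : ℝ → Fin n → ℝ) (u' : Fin n → ℝ) (t : ℝ)
    (hQ : ∀ i j, HasDerivAt (fun s => Q s i j) (Q' i j) t) (hu : HasDerivAt u u' t) :
    HasDerivAt (fun s => u s ⬝ᵥ Q s *ᵥ u s)
      (u' ⬝ᵥ Q t *ᵥ u t + u t ⬝ᵥ Q' *ᵥ u t + u t ⬝ᵥ Q t *ᵥ u') t := by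
  have h1 := hasDerivAt_pi.1 hu
  have h := HasDerivAt.fun_sum (u := Finset.univ) (fun i _ => (h1 i).fun_mul
    (HasDerivAt.fun_sum (u := Finset.univ) (fun j _ => (hQ i j).fun_mul (h1 j))))
  refine HasDerivAt.congr_deriv (f := fun s => u s ⬝ᵥ Q s *ᵥ u s) h ?_
  simp only [dotProduct, mulVec, Finset.sum_add_distrib, mul_add]
  ring

lemma mri_symm {n : ℕ} (M : Matrix (Fin n) (Fin n) ℝ) (hM : M.IsSymm) (a b : Fin n → ℝ) :
    a ⬝ᵥ M *ᵥ b = b ⬝ᵥ M *ᵥ a := by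
  rw [dotProduct_mulVec, ← mulVec_transpose, hM.eq, dotProduct_comm]

lemma mri_exp {n : ℕ} (M : Matrix (Fin n) (Fin n) ℝ) (hM : M.IsSymm)
    (G : (Fin n → ℝ) → Fin n → ℝ) (x : Fin n → ℝ) (hG : DifferentiableAt ℝ G x) :
    DifferentiableAt ℝ (fun y => Real.exp (-(G y ⬝ᵥ M *ᵥ G y))) x ∧
    ∀ v, fderiv ℝ (fun y => Real.exp (-(G y ⬝ᵥ M *ᵥ G y))) x v
      = -(2 * (G x ⬝ᵥ M *ᵥ fderiv ℝ G x v)) * Real.exp (-(G x ⬝ᵥ M *ᵥ G x)) := by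
  obtain ⟨h1, h2⟩ := mri_space M G G x hG hG
  have h := h1.hasFDerivAt.fun_neg.exp
  refine ⟨h.differentiableAt, fun v => ?_⟩
  rw [HasFDerivAt.fderiv h]
  simp only [_root_.smul_apply, _root_.neg_apply, h2, smul_eq_mul]
  rw [mri_symm M hM (fderiv ℝ G x v)]
  ring

lemma mri_hess {n : ℕ} (M : Matrix (Fin n) (Fin n) ℝ) (hM : M.IsSymm)
    (G : (Fin n → ℝ) → Fin n → ℝ) (x : Fin n → ℝ) (hG : ContDiff ℝ 2 G) (v : Fin n → ℝ) :
    fderiv ℝ (fun z => fderiv ℝ (fun y => Real.exp (-(G y ⬝ᵥ M *ᵥ G y))) z v) x v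
      = (4 * (G x ⬝ᵥ M *ᵥ fderiv ℝ G x v) ^ 2
          - 2 * (fderiv ℝ G x v ⬝ᵥ M *ᵥ fderiv ℝ G x v)
          - 2 * (G x ⬝ᵥ M *ᵥ fderiv ℝ (fun z => fderiv ℝ G z v) x v))
        * Real.exp (-(G x ⬝ᵥ M *ᵥ G x)) := by
  have hd : Differentiable ℝ G := hG.differentiable (by norm_num)
  have hd2 : Differentiable ℝ (fun z => fderiv ℝ G z v) :=
    ((hG.fderiv_right (m := 1) (by norm_num)).clm_apply contDiff_const).differentiable (by norm_num)
  have e : (fun z => fderiv ℝ (fun y => Real.exp (-(G y ⬝ᵥ M *ᵥ G y))) z v) = fun z =>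
      -(2 * (G z ⬝ᵥ M *ᵥ fderiv ℝ G z v)) * Real.exp (-(G z ⬝ᵥ M *ᵥ G z)) :=
    funext fun z => (mri_exp M hM G z (hd z)).2 v
  rw [e]
  obtain ⟨a1, a2⟩ := mri_space M G (fun z => fderiv ℝ G z v) x (hd x) (hd2 x)
  obtain ⟨b1, b2⟩ := mri_exp M hM G x (hd x)
  have h := (a1.hasFDerivAt.const_mul 2).fun_neg.fun_mul b1.hasFDerivAt
  rw [HasFDerivAt.fderiv h]
  simp only [_root_.add_apply, _root_.smul_apply,
    _root_.neg_apply, a2, b2, smul_eq_mul]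
  ring

lemma mri_jac {n : ℕ} (G : (Fin n → ℝ) → Fin n → ℝ) (x v : Fin n → ℝ) :
    jac G x *ᵥ v = fderiv ℝ G x v := by
  have hv : v = ∑ i, v i • (Pi.single i (1 : ℝ) : Fin n → ℝ) := by
    funext k; simp [Finset.sum_apply, Pi.single_apply]
  conv_rhs => rw [hv, map_sum]
  funext k
  simp [jac, mulVec, dotProduct, Finset.sum_apply, mul_comm]

/-- **Master residual identity for the exponential-of-quadratic-form ansatz.**
With drift `f` smooth, `Σ₀ = diag σ` constant diagonal with nonnegative entries,
`F(·,t)` twice continuously differentiable in `x` and differentiable in `t` with time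
derivative `Ft`, and `Q(t)` symmetric differentiable with derivative `Q'`, the function
`p(x,t) = exp(−F(x,t)ᵀ Q(t) F(x,t))` satisfies, at every `(x,t)`,
`∂p/∂t + ∇·(f p) − (1/2) Tr(Σ₀ ∇²p)
  = [−2 FᵀQ(∂F/∂t + J_F f) − Fᵀ(dQ/dt)F + (∇·f) − 2 FᵀQ J_F Σ₀ J_Fᵀ Q F
     + Tr(Σ₀ J_FᵀQJ_F) + FᵀQΔ] p`. -/
theorem master_residual_identity {n : ℕ}
    (f : (Fin n → ℝ) → (Fin n → ℝ)) (hf : ContDiff ℝ (⊤ : ℕ∞) f)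
    (σ : Fin n → ℝ) (hσ : ∀ j, 0 ≤ σ j)
    (F Ft : ℝ → (Fin n → ℝ) → (Fin n → ℝ))
    (hFx : ∀ t : ℝ, ContDiff ℝ 2 (F t))
    (hFt : ∀ (x : Fin n → ℝ) (t : ℝ), HasDerivAt (fun s => F s x) (Ft t x) t)
    (Q Q' : ℝ → Matrix (Fin n) (Fin n) ℝ)
    (hQ : ∀ (i j : Fin n) (t : ℝ), HasDerivAt (fun s => Q s i j) (Q' t i j) t)
    (hQsymm : ∀ t : ℝ, (Q t).IsSymm)
    (Δ : ℝ → (Fin n → ℝ) → (Fin n → ℝ))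
    (hΔ : ∀ t x k, Δ t x k = ∑ j, σ j *
      fderiv ℝ (fun y => fderiv ℝ (fun z => F t z k) y (Pi.single j 1)) x (Pi.single j 1)) :
    ∀ (x : Fin n → ℝ) (t : ℝ),
      deriv (fun s => Real.exp (-(F s x ⬝ᵥ Q s *ᵥ F s x))) t
        + divg (fun y => Real.exp (-(F t y ⬝ᵥ Q t *ᵥ F t y)) • f y) x
        - (1 / 2 : ℝ) * Matrix.trace (Matrix.diagonal σ
            * hess (fun y => Real.exp (-(F t y ⬝ᵥ Q t *ᵥ F t y))) x)
      = (-(2 * (F t x ⬝ᵥ Q t *ᵥ (Ft t x + jac (F t) x *ᵥ f x)))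
          - F t x ⬝ᵥ Q' t *ᵥ F t x
          + divg f x
          - 2 * (F t x ⬝ᵥ Q t *ᵥ (jac (F t) x *ᵥ (Matrix.diagonal σ *ᵥ ((jac (F t) x)ᵀ *ᵥ (Q t *ᵥ F t x)))))
          + Matrix.trace (Matrix.diagonal σ * ((jac (F t) x)ᵀ * Q t * jac (F t) x))
          + F t x ⬝ᵥ Q t *ᵥ Δ t x)
        * Real.exp (-(F t x ⬝ᵥ Q t *ᵥ F t x)) := by
  intro x t
  have hd : Differentiable ℝ (F t) := (hFx t).differentiable (by norm_num)
  have hfd : Differentiable ℝ f := hf.differentiable (by simp)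
  have hsy := hQsymm t
  -- time derivative
  have h1 : deriv (fun s => Real.exp (-(F s x ⬝ᵥ Q s *ᵥ F s x))) t
      = (-(2 * (F t x ⬝ᵥ Q t *ᵥ Ft t x)) - F t x ⬝ᵥ Q' t *ᵥ F t x)
        * Real.exp (-(F t x ⬝ᵥ Q t *ᵥ F t x)) := by
    have h := (mri_time Q (Q' t) (fun s => F s x) (Ft t x) t (fun i j => hQ i j t)
      (hFt x t)).fun_neg.exp
    rw [h.deriv, mri_symm (Q t) hsy (Ft t x)]
    ring
  -- divergence
  have h2 : divg (fun y => Real.exp (-(F t y ⬝ᵥ Q t *ᵥ F t y)) • f y) x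
      = (divg f x - 2 * (F t x ⬝ᵥ Q t *ᵥ (jac (F t) x *ᵥ f x)))
        * Real.exp (-(F t x ⬝ᵥ Q t *ᵥ F t x)) := by
    obtain ⟨b1, b2⟩ := mri_exp (Q t) hsy (F t) x (hd x)
    have h := b1.hasFDerivAt.fun_smul (hfd x).hasFDerivAt
    have e : ∑ i, (F t x ⬝ᵥ Q t *ᵥ fderiv ℝ (F t) x (Pi.single i 1)) * f x i
        = F t x ⬝ᵥ Q t *ᵥ (jac (F t) x *ᵥ f x) := by
      simp only [← mri_jac, mulVec_mulVec, dotProduct_mulVec, dotProduct_single, mul_one]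
      rfl
    unfold divg
    rw [HasFDerivAt.fderiv h, ← e]
    simp only [_root_.add_apply, _root_.smul_apply,
      ContinuousLinearMap.smulRight_apply, b2, smul_eq_mul, Pi.add_apply, Pi.smul_apply,
      Finset.sum_add_distrib, Finset.mul_sum, sub_mul, Finset.sum_mul]
    rw [sub_eq_add_neg, ← Finset.sum_neg_distrib]
    congr 1 <;> exact Finset.sum_congr rfl fun i _ => by ring
  -- Hessian
  have hD : ∀ j : Fin n, fderiv ℝ (fun z => fderiv ℝ (F t) z (Pi.single j 1)) x (Pi.single j 1)
      = fun k => fderiv ℝ (fun y => fderiv ℝ (fun z => F t z k) y (Pi.single j 1)) x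
        (Pi.single j 1) := by
    intro j
    have hd2 : Differentiable ℝ (fun z => fderiv ℝ (F t) z (Pi.single j (1 : ℝ))) :=
      (((hFx t).fderiv_right (m := 1) (by norm_num)).clm_apply
        contDiff_const).differentiable (by norm_num)
    funext k
    have e : (fun y => fderiv ℝ (fun z => F t z k) y (Pi.single j 1))
        = fun y => fderiv ℝ (F t) y (Pi.single j 1) k := by
      funext y
      rw [(hasFDerivAt_pi'.1 (hd y).hasFDerivAt k).fderiv]
      rfl
    rw [e, (hasFDerivAt_pi'.1 (hd2 x).hasFDerivAt k).fderiv]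
    rfl
  have hDel : ∑ j, σ j * (F t x ⬝ᵥ Q t *ᵥ
      fderiv ℝ (fun z => fderiv ℝ (F t) z (Pi.single j 1)) x (Pi.single j 1))
      = F t x ⬝ᵥ Q t *ᵥ Δ t x := by
    have e : Δ t x = ∑ j, σ j •
        fderiv ℝ (fun z => fderiv ℝ (F t) z (Pi.single j 1)) x (Pi.single j 1) := by
      funext k
      rw [hΔ, Finset.sum_apply]
      exact Finset.sum_congr rfl fun j _ => by rw [hD]; rfl
    rw [e, mulVec_sum, dotProduct_sum]
    exact Finset.sum_congr rfl fun j _ => by rw [mulVec_smul, dotProduct_smul, smul_eq_mul]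
  have hsq : ∑ j, σ j * (F t x ⬝ᵥ Q t *ᵥ fderiv ℝ (F t) x (Pi.single j 1)) ^ 2
      = F t x ⬝ᵥ Q t *ᵥ (jac (F t) x *ᵥ (Matrix.diagonal σ *ᵥ
        ((jac (F t) x)ᵀ *ᵥ (Q t *ᵥ F t x)))) := by
    have e : (jac (F t) x)ᵀ *ᵥ (Q t *ᵥ F t x) = F t x ᵥ* (Q t * jac (F t) x) := by
      rw [← mulVec_transpose, transpose_mul, hsy.eq, mulVec_mulVec]
    rw [e]
    simp only [← mri_jac]
    rw [mulVec_mulVec, dotProduct_mulVec]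
    simp only [mulVec_mulVec, dotProduct_mulVec, dotProduct_single, mul_one]
    rw [← dotProduct_mulVec]
    simp only [dotProduct, mulVec_diagonal]
    exact Finset.sum_congr rfl fun j _ => by ring
  have htr : ∑ j, σ j * (fderiv ℝ (F t) x (Pi.single j 1) ⬝ᵥ Q t *ᵥ
      fderiv ℝ (F t) x (Pi.single j 1))
      = Matrix.trace (Matrix.diagonal σ * ((jac (F t) x)ᵀ * Q t * jac (F t) x)) := by
    simp only [Matrix.trace, diag_apply, diagonal_mul]
    refine Finset.sum_congr rfl fun j _ => ?_
    congr 1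
    rw [Matrix.mul_assoc]
    rfl
  have h3 : Matrix.trace (Matrix.diagonal σ
            * hess (fun y => Real.exp (-(F t y ⬝ᵥ Q t *ᵥ F t y))) x)
      = (4 * (F t x ⬝ᵥ Q t *ᵥ (jac (F t) x *ᵥ (Matrix.diagonal σ *ᵥ
          ((jac (F t) x)ᵀ *ᵥ (Q t *ᵥ F t x)))))
        - 2 * Matrix.trace (Matrix.diagonal σ * ((jac (F t) x)ᵀ * Q t * jac (F t) x))
        - 2 * (F t x ⬝ᵥ Q t *ᵥ Δ t x)) * Real.exp (-(F t x ⬝ᵥ Q t *ᵥ F t x)) := by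
    rw [← hsq, ← htr, ← hDel]
    simp only [Matrix.trace, diag_apply, diagonal_mul, hess, of_apply]
    simp only [mri_hess (Q t) hsy (F t) x (hFx t)]
    simp only [Finset.mul_sum, ← Finset.sum_sub_distrib, Finset.sum_mul]
    exact Finset.sum_congr rfl fun j _ => by ring
  rw [h1, h2, h3, mulVec_add, dotProduct_add]
  ring
end

section
/- Reduction of the Taylor Diffusion framework to classical covariance propagation for linear dynamics. Let A ∈ ℝⁿˣⁿ, Σ₀ ∈ ℝⁿˣⁿ symmetric positive semidefinite, and Q ∈ ℝⁿˣⁿ a constant symmetric positive definite matrix. Suppose Φ: ℝ → ℝⁿˣⁿ is differentiable with Φ(t) invertible for all t and satisfies dΦ/dt = −Φ A − Φ Σ₀ Φᵀ Q Φ (the evolution of the linear map F(x,t) = Φ(t)(x − x₀(t)) prescribed by the framework's map equation for drift f(x) = A x). Then P(t) := (1/2)(Φ(t)ᵀ Q Φ(t))⁻¹ is differentiable and satisfies the Lyapunov differential equation dP/dt = A P + P Aᵀ + Σ₀. -/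
open Matrix Real

section helpers
attribute [local instance] Matrix.linftyOpNormedRing Matrix.linftyOpNormedAlgebra

theorem td_of_entries {n : ℕ} (F : ℝ → Matrix (Fin n) (Fin n) ℝ) (F' : Matrix (Fin n) (Fin n) ℝ)
    (t : ℝ) (h : ∀ i j, HasDerivAt (fun s => F s i j) (F' i j) t) : HasDerivAt F F' t := by
  have h1 : HasDerivAt (fun s => ∑ i, ∑ j, F s i j • Matrix.single i j (1:ℝ))
      (∑ i, ∑ j, F' i j • Matrix.single i j (1:ℝ)) t :=
    HasDerivAt.fun_sum fun i _ => HasDerivAt.fun_sum fun j _ => (h i j).smul_const _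
  have e : ∀ M : Matrix (Fin n) (Fin n) ℝ, ∑ i, ∑ j, M i j • Matrix.single i j (1:ℝ) = M := by
    intro M
    conv_rhs => rw [Matrix.matrix_eq_sum_single M]
    simp [Matrix.smul_single]
  simpa only [e] using h1

theorem td_entries {n : ℕ} (F : ℝ → Matrix (Fin n) (Fin n) ℝ) (F' : Matrix (Fin n) (Fin n) ℝ)
    (t : ℝ) (h : HasDerivAt F F' t) (i j : Fin n) : HasDerivAt (fun s => F s i j) (F' i j) t := by
  let L : Matrix (Fin n) (Fin n) ℝ →L[ℝ] ℝ :=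
    LinearMap.toContinuousLinearMap (Matrix.entryLinearMap ℝ ℝ i j)
  exact L.hasFDerivAt.comp_hasDerivAt t h

theorem td_inv {n : ℕ} (F : ℝ → Matrix (Fin n) (Fin n) ℝ) (F' : Matrix (Fin n) (Fin n) ℝ)
    (t : ℝ) (h : HasDerivAt F F' t) (hu : IsUnit (F t).det) :
    HasDerivAt (fun s => (F s)⁻¹) (-((F t)⁻¹ * F' * (F t)⁻¹)) t := by
  obtain ⟨u, hu'⟩ := (Matrix.isUnit_iff_isUnit_det _).2 hu
  have h2 := hasFDerivAt_ringInverse (𝕜 := ℝ) u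
  rw [hu'] at h2
  have h3 := h2.comp_hasDerivAt t h
  have e : ((u⁻¹ : (Matrix (Fin n) (Fin n) ℝ)ˣ) : Matrix (Fin n) (Fin n) ℝ) = (F t)⁻¹ := by
    rw [← hu', Matrix.coe_units_inv]
  simp only [Matrix.nonsing_inv_eq_ringInverse] at e ⊢
  rw [← e]
  refine HasDerivAt.congr_deriv (f := fun s => Ring.inverse (F s)) h3 ?_
  simp

theorem td_main {n : ℕ} (A S Q : Matrix (Fin n) (Fin n) ℝ) (hS : Sᵀ = S) (hQ : Qᵀ = Q)
    (hQu : IsUnit Q.det) (Φ : ℝ → Matrix (Fin n) (Fin n) ℝ) (t : ℝ) (hu : IsUnit (Φ t).det)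
    (h : ∀ i j : Fin n, HasDerivAt (fun s => Φ s i j)
        ((-(Φ t * A) - Φ t * S * (Φ t)ᵀ * Q * Φ t) i j) t) (i j : Fin n) :
    HasDerivAt (fun s => ((1 / 2 : ℝ) • ((Φ s)ᵀ * Q * Φ s)⁻¹) i j)
      ((A * ((1 / 2 : ℝ) • ((Φ t)ᵀ * Q * Φ t)⁻¹) + ((1 / 2 : ℝ) • ((Φ t)ᵀ * Q * Φ t)⁻¹) * Aᵀ + S) i j)
      t := by
  have h1 := td_of_entries Φ _ t h
  have h2 := td_of_entries (fun s => (Φ s)ᵀ)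
    (-(Φ t * A) - Φ t * S * (Φ t)ᵀ * Q * Φ t)ᵀ t (fun i j => h j i)
  have h3 := (h2.mul_const Q).mul h1
  have hM : IsUnit ((Φ t)ᵀ * Q * Φ t).det := by
    rw [Matrix.det_mul, Matrix.det_mul, Matrix.det_transpose]
    exact (hu.mul hQu).mul hu
  have h4 := (td_inv _ _ t h3 hM).const_smul (1 / 2 : ℝ)
  refine td_entries (fun s => (1 / 2 : ℝ) • ((Φ s)ᵀ * Q * Φ s)⁻¹) _ t ?_ i j
  refine h4.congr_deriv ?_
  have e : (-(Φ t * A) - Φ t * S * (Φ t)ᵀ * Q * Φ t)ᵀ * Q * Φ t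
      + (Φ t)ᵀ * Q * (-(Φ t * A) - Φ t * S * (Φ t)ᵀ * Q * Φ t)
      = -(Aᵀ * ((Φ t)ᵀ * Q * Φ t)) - ((Φ t)ᵀ * Q * Φ t) * A
        - (2:ℝ) • (((Φ t)ᵀ * Q * Φ t) * S * ((Φ t)ᵀ * Q * Φ t)) := by
    simp only [Matrix.transpose_sub, Matrix.transpose_neg, Matrix.transpose_mul, hS, hQ,
      Matrix.transpose_transpose, two_smul]
    noncomm_ring
  simp only [Pi.mul_apply]
  rw [e]
  generalize (Φ t)ᵀ * Q * Φ t = M at hM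
  have a1 : M⁻¹ * M = 1 := Matrix.nonsing_inv_mul _ hM
  have a2 : M * M⁻¹ = 1 := Matrix.mul_nonsing_inv _ hM
  have b1 : M⁻¹ * (Aᵀ * M) * M⁻¹ = M⁻¹ * Aᵀ := by
    rw [Matrix.mul_assoc, Matrix.mul_assoc, a2, Matrix.mul_one]
  have b2 : M⁻¹ * (M * A) * M⁻¹ = A * M⁻¹ := by
    rw [← Matrix.mul_assoc, a1, Matrix.one_mul]
  have b3 : M⁻¹ * (M * S * M) * M⁻¹ = S := by
    rw [Matrix.mul_assoc M, ← Matrix.mul_assoc, a1, Matrix.one_mul, Matrix.mul_assoc, a2,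
      Matrix.mul_one]
  simp only [Matrix.mul_sub, Matrix.sub_mul, Matrix.mul_neg, Matrix.neg_mul, Matrix.mul_smul,
    Matrix.smul_mul, b1, b2, b3]
  module

end helpers

/-- **Reduction of the Taylor Diffusion framework to classical covariance propagation
for linear dynamics.**
If `Φ(t)` is invertible, differentiable, and satisfies
`dΦ/dt = −Φ A − Φ Σ₀ Φᵀ Q Φ` (the framework's map evolution for the linear map
`F(x,t) = Φ(t)(x − x₀(t))` and drift `f(x) = A x`), then
`P(t) = (1/2)(Φ(t)ᵀ Q Φ(t))⁻¹` is differentiable and satisfies the Lyapunov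
differential equation `dP/dt = A P + P Aᵀ + Σ₀`. -/
theorem taylor_diffusion_reduces_to_covariance_propagation {n : ℕ}
    (A : Matrix (Fin n) (Fin n) ℝ)
    (Sigma0 : Matrix (Fin n) (Fin n) ℝ) (hSigma0 : Sigma0.PosSemidef)
    (Q : Matrix (Fin n) (Fin n) ℝ) (hQ : Q.PosDef)
    (Φ : ℝ → Matrix (Fin n) (Fin n) ℝ)
    (hΦinv : ∀ t : ℝ, IsUnit (Φ t).det)
    (hΦode : ∀ (t : ℝ) (i j : Fin n),
      HasDerivAt (fun s => Φ s i j)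
        ((-(Φ t * A) - Φ t * Sigma0 * (Φ t)ᵀ * Q * Φ t) i j) t)
    (P : ℝ → Matrix (Fin n) (Fin n) ℝ)
    (hP : ∀ t : ℝ, P t = (1 / 2 : ℝ) • ((Φ t)ᵀ * Q * Φ t)⁻¹) :
    ∀ (t : ℝ) (i j : Fin n),
      HasDerivAt (fun s => P s i j) ((A * P t + P t * Aᵀ + Sigma0) i j) t := by
  intro t i j
  have hS : Sigma0ᵀ = Sigma0 := by
    simpa [Matrix.IsHermitian, Matrix.conjTranspose_eq_transpose_of_trivial] using hSigma0.isHermitian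
  have hQt : Qᵀ = Q := by
    simpa [Matrix.IsHermitian, Matrix.conjTranspose_eq_transpose_of_trivial] using hQ.isHermitian
  have := td_main A Sigma0 Q hS hQt hQ.det_pos.ne'.isUnit Φ t (hΦinv t) (hΦode t) i j
  simpa only [hP] using this
end

section
/- Preservation of positive semidefiniteness under the precision-matrix dynamics. Let M_i: [0,∞) → ℝⁿˣⁿ, i = 1,…,m, be continuous matrix-valued functions and let Q: [0,∞) → ℝⁿˣⁿ be continuously differentiable and satisfy dQ/dt(t) = (1/2) Σ_{i=1}^m M_i(t)ᵀ Q(t) M_i(t) for all t ≥ 0. If Q(0) is symmetric positive semidefinite, then Q(t) is symmetric positive semidefinite for every t ≥ 0. -/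
open Matrix Real

lemma aux_mulVec_sq {n : ℕ} (A : Matrix (Fin n) (Fin n) ℝ) (x : Fin n → ℝ) :
    (A *ᵥ x) ⬝ᵥ (A *ᵥ x) ≤ (∑ j, ∑ k, A j k ^ 2) * (x ⬝ᵥ x) := by
  have h : x ⬝ᵥ x = ∑ k, x k ^ 2 := by simp [dotProduct, sq]
  rw [h, Finset.sum_mul]
  simp only [mulVec, dotProduct, ← sq]
  exact Finset.sum_le_sum fun j _ => Finset.sum_mul_sq_le_sq_mul_sq _ _ _

lemma aux_bilin_lower {n : ℕ} (A : Matrix (Fin n) (Fin n) ℝ) (x y : Fin n → ℝ) :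
    -((∑ j, ∑ k, |A j k|) * (x ⬝ᵥ x + y ⬝ᵥ y)) ≤ x ⬝ᵥ (A *ᵥ y) := by
  have hx : ∀ (z : Fin n → ℝ) j, z j ^ 2 ≤ z ⬝ᵥ z := by
    intro z j
    have h : z ⬝ᵥ z = ∑ k, z k ^ 2 := by simp [dotProduct, sq]
    rw [h]
    exact Finset.single_le_sum (f := fun k => z k ^ 2) (fun i _ => sq_nonneg _) (Finset.mem_univ j)
  simp only [mulVec, dotProduct, Finset.mul_sum, Finset.sum_mul, ← Finset.sum_neg_distrib]
  refine Finset.sum_le_sum fun j _ => Finset.sum_le_sum fun k _ => ?_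
  have h1 := hx x j
  have h2 := hx y k
  simp only [dotProduct] at h1 h2
  have h3 : |x j * y k| ≤ (∑ i, x i * x i + ∑ i, y i * y i) := by
    rw [abs_le]
    constructor <;> nlinarith [sq_nonneg (x j + y k), sq_nonneg (x j - y k), sq_nonneg (x j), sq_nonneg (y k)]
  have h4 : |x j * (A j k * y k)| = |A j k| * |x j * y k| := by
    rw [← abs_mul]; congr 1; ring
  have h5 := neg_abs_le (x j * (A j k * y k))
  have h6 := mul_le_mul_of_nonneg_left h3 (abs_nonneg (A j k))
  linarith

lemma aux_key {n m : ℕ}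
    (M : Fin m → ℝ → Matrix (Fin n) (Fin n) ℝ)
    (hM : ∀ i, ContinuousOn (M i) (Set.Ici (0 : ℝ)))
    (Q : ℝ → Matrix (Fin n) (Fin n) ℝ)
    (hQ : ∀ t ∈ Set.Ici (0 : ℝ), ∀ i j : Fin n,
      HasDerivWithinAt (fun s => Q s i j)
        (((1 / 2 : ℝ) • ∑ i : Fin m, (M i t)ᵀ * Q t * M i t) i j) (Set.Ici (0 : ℝ)) t)
    (S : (Fin n → ℝ) → (Fin n → ℝ) → Prop)
    (hS : ∀ (A : Matrix (Fin n) (Fin n) ℝ) x y, S x y → S (A *ᵥ x) (A *ᵥ y))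
    (h0 : ∀ x y, S x y → 0 ≤ x ⬝ᵥ (Q 0 *ᵥ y))
    (T : ℝ) (hT : 0 ≤ T) (x y : Fin n → ℝ) (hxy : S x y) : 0 ≤ x ⬝ᵥ (Q T *ᵥ y) := by
  have hsub : Set.Icc 0 T ⊆ Set.Ici (0:ℝ) := fun s hs => hs.1
  have hMe : ∀ i j k, ContinuousOn (fun t => M i t j k) (Set.Icc 0 T) := fun i j k =>
    (continuous_id.matrix_elem j k).comp_continuousOn ((hM i).mono hsub)
  have hQe : ∀ j k, ContinuousOn (fun t => Q t j k) (Set.Icc 0 T) := fun j k t ht =>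
    ((hQ t (hsub ht) j k).continuousWithinAt).mono hsub
  obtain ⟨K, hK⟩ : ∃ K, ∀ t ∈ Set.Icc 0 T, (∑ i, ∑ j, ∑ k, M i t j k ^ 2) ≤ K := by
    have hc : ContinuousOn (fun t => ∑ i, ∑ j, ∑ k, M i t j k ^ 2) (Set.Icc 0 T) :=
      continuousOn_finsetSum _ fun i _ => continuousOn_finsetSum _ fun j _ =>
        continuousOn_finsetSum _ fun k _ => (hMe i j k).pow 2
    obtain ⟨K, hK⟩ := isCompact_Icc.bddAbove_image hc
    exact ⟨K, fun t ht => hK ⟨t, ht, rfl⟩⟩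
  obtain ⟨a, ha⟩ : ∃ K, ∀ t ∈ Set.Icc 0 T, (∑ j, ∑ k, |Q t j k|) ≤ K := by
    have hc : ContinuousOn (fun t => ∑ j, ∑ k, |Q t j k|) (Set.Icc 0 T) :=
      continuousOn_finsetSum _ fun j _ =>
        continuousOn_finsetSum _ fun k _ => (hQe j k).abs
    obtain ⟨K, hK⟩ := isCompact_Icc.bddAbove_image hc
    exact ⟨K, fun t ht => hK ⟨t, ht, rfl⟩⟩
  have hT0 : (0:ℝ) ∈ Set.Icc 0 T := ⟨le_rfl, hT⟩
  have hK0 : 0 ≤ K := le_trans (by positivity) (hK 0 hT0)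
  have ha0 : 0 ≤ a := le_trans (by positivity) (ha 0 hT0)
  have hnn : ∀ z : Fin n → ℝ, 0 ≤ z ⬝ᵥ z := fun z =>
    Finset.sum_nonneg fun i _ => mul_self_nonneg _
  have hMx : ∀ t ∈ Set.Icc 0 T, ∀ z : Fin n → ℝ,
      ∑ i, (M i t *ᵥ z) ⬝ᵥ (M i t *ᵥ z) ≤ K * (z ⬝ᵥ z) := by
    intro t ht z
    calc _ ≤ ∑ i, (∑ j, ∑ k, M i t j k ^ 2) * (z ⬝ᵥ z) :=
          Finset.sum_le_sum fun i _ => aux_mulVec_sq _ _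
      _ = (∑ i, ∑ j, ∑ k, M i t j k ^ 2) * (z ⬝ᵥ z) := by rw [Finset.sum_mul]
      _ ≤ _ := mul_le_mul_of_nonneg_right (hK t ht) (hnn z)
  have hder : ∀ t ∈ Set.Ici (0:ℝ), ∀ x y : Fin n → ℝ,
      HasDerivWithinAt (fun s => x ⬝ᵥ (Q s *ᵥ y))
        ((1/2) * ∑ i, (M i t *ᵥ x) ⬝ᵥ (Q t *ᵥ (M i t *ᵥ y))) (Set.Ici 0) t := by
    intro t ht x y
    have e : (1/2) * ∑ i, (M i t *ᵥ x) ⬝ᵥ (Q t *ᵥ (M i t *ᵥ y)) =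
        x ⬝ᵥ (((1 / 2 : ℝ) • ∑ i : Fin m, (M i t)ᵀ * Q t * M i t) *ᵥ y) := by
      rw [smul_mulVec, dotProduct_smul, smul_eq_mul, sum_mulVec, dotProduct_sum]
      congr 1
      refine Finset.sum_congr rfl fun i _ => ?_
      rw [← mulVec_mulVec, ← mulVec_mulVec, dotProduct_mulVec x, vecMul_transpose]
    rw [e]
    simp only [dotProduct, mulVec]
    refine HasDerivWithinAt.fun_sum fun j _ => HasDerivWithinAt.const_mul _ ?_
    exact HasDerivWithinAt.fun_sum fun k _ => (hQ t ht j k).mul_const _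
  have hind : ∀ k : ℕ, ∀ s ∈ Set.Icc 0 T, ∀ x y, S x y →
      -(a * ((K * s) ^ k / k.factorial) * (x ⬝ᵥ x + y ⬝ᵥ y)) ≤ x ⬝ᵥ (Q s *ᵥ y) := by
    intro k
    induction k with
    | zero =>
      intro s hs x y _
      have h1 := aux_bilin_lower (Q s) x y
      have h2 := mul_le_mul_of_nonneg_right (ha s hs) (add_nonneg (hnn x) (hnn y))
      simp only [pow_zero, Nat.factorial_zero, Nat.cast_one, div_one, mul_one]
      linarith
    | succ k ih =>
      intro s hs x y hxy
      set N := x ⬝ᵥ x + y ⬝ᵥ y with hN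
      have hN0 : 0 ≤ N := add_nonneg (hnn x) (hnn y)
      have hfd : ∀ t ∈ Set.Ici (0:ℝ), HasDerivWithinAt
          (fun s => x ⬝ᵥ (Q s *ᵥ y) + a * ((K * s) ^ (k+1) / (k+1).factorial) * N)
          ((1/2) * ∑ i, (M i t *ᵥ x) ⬝ᵥ (Q t *ᵥ (M i t *ᵥ y)) +
            a * (K * ((K * t) ^ k / k.factorial)) * N) (Set.Ici 0) t := by
        intro t ht
        refine (hder t ht x y).add ?_
        refine HasDerivWithinAt.mul_const (HasDerivWithinAt.const_mul _ ?_) _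
        have h1 : HasDerivAt (fun s => K * s) K t := by
          simpa using (hasDerivAt_id t).const_mul K
        have h2 := ((h1.pow (k+1)).div_const ((k+1).factorial : ℝ)).hasDerivWithinAt (s := Set.Ici 0)
        refine h2.congr_deriv ?_
        rw [Nat.factorial_succ]
        push_cast
        have : (k.factorial : ℝ) ≠ 0 := by positivity
        have : (k + 1 : ℝ) ≠ 0 := by positivity
        field_simp
      have hmono : MonotoneOn
          (fun s => x ⬝ᵥ (Q s *ᵥ y) + a * ((K * s) ^ (k+1) / (k+1).factorial) * N)
          (Set.Icc 0 T) := by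
        refine monotoneOn_of_hasDerivWithinAt_nonneg (convex_Icc 0 T)
          (fun t ht => (hfd t (hsub ht)).continuousWithinAt.mono hsub)
          (fun t ht => (hfd t (hsub (interior_subset ht))).mono
            (interior_subset.trans hsub)) ?_
        intro t ht
        have ht := interior_subset ht
        set c := a * ((K * t) ^ k / k.factorial) with hc
        have hc0 : 0 ≤ c := by have := ht.1; positivity
        have h1 : ∑ i, -(c * ((M i t *ᵥ x) ⬝ᵥ (M i t *ᵥ x) + (M i t *ᵥ y) ⬝ᵥ (M i t *ᵥ y))) ≤
            ∑ i, (M i t *ᵥ x) ⬝ᵥ (Q t *ᵥ (M i t *ᵥ y)) :=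
          Finset.sum_le_sum fun i _ => ih t ht _ _ (hS _ _ _ hxy)
        rw [Finset.sum_neg_distrib, ← Finset.mul_sum, Finset.sum_add_distrib] at h1
        have h2 := mul_le_mul_of_nonneg_left (add_le_add (hMx t ht x) (hMx t ht y)) hc0
        have h3 : a * (K * ((K * t) ^ k / k.factorial)) * N = c * (K * N) := by rw [hc]; ring
        have h4 : 0 ≤ c * (K * N) := by positivity
        have h5 : c * (K * (x ⬝ᵥ x) + K * (y ⬝ᵥ y)) = c * (K * N) := by rw [hN]; ring
        rw [h3]
        linarith
      have h := hmono hT0 hs hs.1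
      have h00 := h0 x y hxy
      simp only [mul_zero, ne_eq, Nat.add_eq_zero_iff, one_ne_zero, and_false, not_false_eq_true,
        zero_pow, zero_div, zero_mul, add_zero] at h
      linarith
  have hlim : Filter.Tendsto (fun k : ℕ =>
      -(a * ((K * T) ^ k / k.factorial) * (x ⬝ᵥ x + y ⬝ᵥ y))) Filter.atTop (nhds 0) := by
    have := (((FloorSemiring.tendsto_pow_div_factorial_atTop (K * T)).const_mul a).mul_const
      (x ⬝ᵥ x + y ⬝ᵥ y)).neg
    simpa using this
  exact le_of_tendsto' hlim fun k => hind k T ⟨hT, le_rfl⟩ x y hxy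


/-- **Preservation of positive semidefiniteness under the precision-matrix dynamics.**
Let `M i : [0,∞) → ℝⁿˣⁿ`, `i = 1,…,m`, be continuous and let `Q : [0,∞) → ℝⁿˣⁿ` be
continuously differentiable with `dQ/dt = (1/2) ∑ᵢ Mᵢᵀ Q Mᵢ` on `[0,∞)`.
If `Q(0)` is symmetric positive semidefinite, then so is `Q(t)` for every `t ≥ 0`. -/
theorem precision_dynamics_preserves_posSemidef {n m : ℕ}
    (M : Fin m → ℝ → Matrix (Fin n) (Fin n) ℝ)
    (hM : ∀ i, ContinuousOn (M i) (Set.Ici (0 : ℝ)))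
    (Q : ℝ → Matrix (Fin n) (Fin n) ℝ)
    (Q' : ℝ → Matrix (Fin n) (Fin n) ℝ)
    (hQderiv : ∀ t ∈ Set.Ici (0 : ℝ), ∀ i j : Fin n,
      HasDerivWithinAt (fun s => Q s i j) (Q' t i j) (Set.Ici (0 : ℝ)) t)
    (hQ'cont : ∀ i j : Fin n, ContinuousOn (fun t => Q' t i j) (Set.Ici (0 : ℝ)))
    (hode : ∀ t ∈ Set.Ici (0 : ℝ),
      Q' t = (1 / 2 : ℝ) • ∑ i : Fin m, (M i t)ᵀ * Q t * M i t)
    (h0 : (Q 0).PosSemidef) :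
    ∀ t : ℝ, 0 ≤ t → (Q t).PosSemidef := by
  intro T hT
  have hQ : ∀ t ∈ Set.Ici (0 : ℝ), ∀ i j : Fin n,
      HasDerivWithinAt (fun s => Q s i j)
        (((1 / 2 : ℝ) • ∑ i : Fin m, (M i t)ᵀ * Q t * M i t) i j) (Set.Ici (0 : ℝ)) t := by
    intro t ht i j
    rw [← hode t ht]
    exact hQderiv t ht i j
  have hsym : (Q T)ᵀ = Q T := by
    have hD := aux_key M hM (fun t => Q t - (Q t)ᵀ) (fun t ht i j => by
        have h := (hQ t ht i j).sub (hQ t ht j i)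
        refine h.congr_deriv ?_
        have e : (1 / 2 : ℝ) • ∑ i : Fin m, (M i t)ᵀ * (Q t - (Q t)ᵀ) * M i t =
            (1 / 2 : ℝ) • ∑ i : Fin m, (M i t)ᵀ * Q t * M i t -
            ((1 / 2 : ℝ) • ∑ i : Fin m, (M i t)ᵀ * Q t * M i t)ᵀ := by
          rw [transpose_smul, transpose_sum, ← smul_sub, ← Finset.sum_sub_distrib]
          congr 1
          refine Finset.sum_congr rfl fun i _ => ?_
          simp [Matrix.mul_sub, Matrix.sub_mul, Matrix.mul_assoc]
        rw [e]
        rfl) (fun _ _ => True) (fun _ _ _ _ => trivial) (fun x y _ => by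
          have h1 : (Q 0)ᵀ = Q 0 := by simpa [IsHermitian] using h0.1
          simp [h1]) T hT
    ext i j
    have h1 := hD (Pi.single i 1) (Pi.single j 1) trivial
    have h2 := hD (Pi.single j 1) (Pi.single i 1) trivial
    simp at h1 h2
    simp only [transpose_apply]
    linarith
  refine PosSemidef.of_dotProduct_mulVec_nonneg (by simpa [IsHermitian] using hsym) fun x => ?_
  have := aux_key M hM Q hQ (fun x y => x = y) (fun A x y h => by rw [h]) (fun x y h => by
    subst h
    simpa using h0.dotProduct_mulVec_nonneg x) T hT x x rfl
  simpa using this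
end
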